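/- Let γ ∈ (0,2), d := 2(γ+1)/(2−γ), and let n be a real number with n ≥ 2d (note 2d > 2). Let b̃ over (ℕ₀, m̃) be the one-dimensional graph associated with the γ-anti-tree, with intrinsic degree path metric ρ̃ and closed balls B̃_k(r). Then there exists C_S > 0 such that for every k ∈ ℕ₀, every r ≥ max(1, ρ̃(0,k)), and every finitely supported φ : ℕ₀ → ℝ with support contained in B̃_k(r): ( m̃(B̃_k(r))^{2/n} / (C_S r²) ) · ( Σ_{l∈ℕ₀} m̃(l) |φ(l)|^{2n/(n−2)} )^{(n−2)/n} ≤ Σ_{k',l∈ℕ₀} b̃(k',l) (φ(k') − φ(l))² + (1/r²) · Σ_{l∈ℕ₀} m̃(l) φ(l)². -/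

import Mathlib

open scoped BigOperators

/-- Vertex set of the anti-tree with sphere function `s`:
the `k`-th sphere has `s k` elements. -/
def AntiTree (s : ℕ → ℕ) : Type := Σ k : ℕ, Fin (s k)

namespace AntiTree

/-- Standard edge weights of the anti-tree: consecutive spheres are completely connected,
and there are no other edges. -/
def wt (s : ℕ → ℕ) (x y : AntiTree s) : ℝ :=
  if x.1 + 1 = y.1 ∨ y.1 + 1 = x.1 then 1 else 0

/-- Weighted vertex degree with respect to the counting measure `m ≡ 1`. -/
noncomputable def Deg (s : ℕ → ℕ) (x : AntiTree s) : ℝ := ∑' y : AntiTree s, wt s x y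

end AntiTree

/-- Intrinsic degree path (pseudo-)metric of a weighted graph `b` whose weighted degree
function is `D`:  `ρ(x,y)` is the infimum over finite paths from `x` to `y` of
`∑_j min(1/D(x_j), 1/D(x_{j+1}))^{1/2}`. -/
noncomputable def pathMetric {X : Type*} (b : X → X → ℝ) (D : X → ℝ) (x y : X) : ℝ :=
  sInf { L : ℝ | ∃ (k : ℕ) (p : ℕ → X), p 0 = x ∧ p k = y ∧
    (∀ j < k, 0 < b (p j) (p (j + 1))) ∧
    L = ∑ j ∈ Finset.range k, Real.sqrt (min (1 / D (p j)) (1 / D (p (j + 1)))) }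

/-- The intrinsic degree path metric of the anti-tree. -/
noncomputable def AntiTree.rho (s : ℕ → ℕ) : AntiTree s → AntiTree s → ℝ :=
  pathMetric (AntiTree.wt s) (AntiTree.Deg s)

/-- Closed balls with respect to the intrinsic degree path metric. -/
noncomputable def AntiTree.ball (s : ℕ → ℕ) (x : AntiTree s) (r : ℝ) : Set (AntiTree s) :=
  {y | AntiTree.rho s x y ≤ r}

/-- The sphere function of the `γ`-anti-tree: `s (k-1) = ⌊k ^ γ⌋` for `k ≥ 1`,
i.e. `s k = ⌊(k+1) ^ γ⌋`. -/
noncomputable def gammaSphere (γ : ℝ) : ℕ → ℕ := fun k => ⌊((k : ℝ) + 1) ^ γ⌋₊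
namespace OneDim

/-- Measure of the one-dimensional graph associated with an anti-tree. -/
noncomputable def m (s : ℕ → ℕ) (k : ℕ) : ℝ := (s k : ℝ)

/-- Edge weights of the one-dimensional graph associated with an anti-tree. -/
noncomputable def wt (s : ℕ → ℕ) (k l : ℕ) : ℝ :=
  if k + 1 = l ∨ l + 1 = k then (s k : ℝ) * (s l : ℝ) else 0

/-- Weighted vertex degree of the one-dimensional graph. -/
noncomputable def Deg (s : ℕ → ℕ) (k : ℕ) : ℝ := (1 / m s k) * ∑' l : ℕ, wt s k l

/-- Intrinsic degree path metric of the one-dimensional graph. -/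
noncomputable def rho (s : ℕ → ℕ) : ℕ → ℕ → ℝ := pathMetric (wt s) (Deg s)

/-- Closed balls of the one-dimensional graph. -/
noncomputable def ball (s : ℕ → ℕ) (k : ℕ) (r : ℝ) : Set ℕ := {l | rho s k l ≤ r}

/-- Measure of a subset of the one-dimensional graph. -/
noncomputable def vol (s : ℕ → ℕ) (A : Set ℕ) : ℝ := ∑' l : ℕ, Set.indicator A (m s) l

end OneDim

section Helpers

open Finset

/-- A telescoping bound for powers. The constant `C` has the sign of `p`. -/
lemma exists_rpow_sub_one_le_mul_sub {p : ℝ} (hp : p ≠ 0) :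
    ∃ C : ℝ, 0 < C * p ∧ ∀ x : ℝ, 1 ≤ x → x ^ (p - 1) ≤ C * ((x + 1) ^ p - x ^ p) := by
  refine ⟨2 ^ |p - 1| / p, ?_, fun x hx => ?_⟩
  · rw [div_mul_cancel₀ _ hp]
    positivity
  have hx0 : 0 < x := by linarith
  obtain ⟨ξ, ⟨hξ1, hξ2⟩, hξ⟩ := exists_hasDerivAt_eq_slope (fun y : ℝ => y ^ p)
    (fun y => p * y ^ (p - 1)) (show x < x + 1 by linarith)
    (continuousOn_id.rpow_const fun y hy => Or.inl (by
      have := hy.1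
      simp only [id]
      linarith))
    (fun y hy => Real.hasDerivAt_rpow_const (Or.inl (by linarith [hy.1])))
  have hξ0 : 0 < ξ := by linarith
  simp only [add_sub_cancel_left, div_one] at hξ
  rw [← hξ, ← mul_assoc, div_mul_cancel₀ _ hp]
  rcases le_total 0 (p - 1) with h | h
  · rw [abs_of_nonneg h, ← Real.mul_rpow (by norm_num) hξ0.le]
    exact Real.rpow_le_rpow hx0.le (by linarith) h
  · rw [abs_of_nonpos h, Real.rpow_neg (by norm_num), ← Real.inv_rpow (by norm_num),
      ← Real.mul_rpow (by norm_num) hξ0.le]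
    exact Real.rpow_le_rpow_of_nonpos (by positivity) (by linarith) h

lemma sum_Ico_rpow_sub_one_le {p C : ℝ}
    (hC : ∀ x : ℝ, 1 ≤ x → x ^ (p - 1) ≤ C * ((x + 1) ^ p - x ^ p)) {a b : ℕ} (hab : a ≤ b) :
    ∑ j ∈ Ico a b, ((j : ℝ) + 1) ^ (p - 1) ≤ C * (((b : ℝ) + 1) ^ p - ((a : ℝ) + 1) ^ p) := by
  rw [← Finset.sum_Ico_sub (fun j : ℕ => ((j : ℝ) + 1) ^ p) hab, mul_sum]
  refine sum_le_sum fun j _ => ?_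
  have := hC ((j : ℝ) + 1) (by linarith [(Nat.cast_nonneg j : (0 : ℝ) ≤ j)])
  push_cast
  exact this

lemma exists_sum_range_rpow_le {p : ℝ} (hp : 0 < p) :
    ∃ K : ℝ, 0 < K ∧ ∀ M : ℕ, 1 ≤ M →
      ∑ j ∈ range M, ((j : ℝ) + 1) ^ (p - 1) ≤ K * (M : ℝ) ^ p := by
  obtain ⟨C, hCp, hC⟩ := exists_rpow_sub_one_le_mul_sub hp.ne'
  have hC0 : 0 < C := pos_of_mul_pos_left hCp hp.le
  refine ⟨C * 2 ^ p, by positivity, fun M hM => ?_⟩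
  have hM' : (1 : ℝ) ≤ M := by exact_mod_cast hM
  rw [range_eq_Ico]
  refine (sum_Ico_rpow_sub_one_le hC M.zero_le).trans ?_
  rw [mul_assoc, ← Real.mul_rpow (by norm_num) (by positivity)]
  refine mul_le_mul_of_nonneg_left ?_ hC0.le
  have : ((M : ℝ) + 1) ^ p ≤ (2 * M) ^ p :=
    Real.rpow_le_rpow (by positivity) (by linarith) hp.le
  have h0 : 0 ≤ (((0 : ℕ) : ℝ) + 1) ^ p := by positivity
  linarith

lemma exists_sum_Ico_rpow_le {δ : ℝ} (hδ : 0 < δ) :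
    ∃ K : ℝ, 0 < K ∧ ∀ a b : ℕ, a ≤ b →
      ∑ j ∈ Ico a b, ((j : ℝ) + 1) ^ (-δ - 1) ≤ K * ((a : ℝ) + 1) ^ (-δ) := by
  obtain ⟨C, hCp, hC⟩ := exists_rpow_sub_one_le_mul_sub (neg_ne_zero.2 hδ.ne')
  have hC0 : 0 < -C := pos_of_mul_pos_left (by linarith : 0 < -C * δ) hδ.le
  refine ⟨-C, hC0, fun a b hab => (sum_Ico_rpow_sub_one_le hC hab).trans ?_⟩
  have := mul_nonneg hC0.le (by positivity : 0 ≤ ((b : ℝ) + 1) ^ (-δ))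
  linarith

section GammaSphere

variable {γ : ℝ}

lemma gammaSphere_le (k : ℕ) : (gammaSphere γ k : ℝ) ≤ ((k : ℝ) + 1) ^ γ :=
  Nat.floor_le (by positivity)

lemma gammaSphere_mono (hγ : 0 ≤ γ) : Monotone (gammaSphere γ) := fun k l h =>
  Nat.floor_le_floor (Real.rpow_le_rpow (by positivity) (by gcongr) hγ)

lemma one_le_gammaSphere (hγ : 0 ≤ γ) (k : ℕ) : 1 ≤ gammaSphere γ k :=
  Nat.le_floor (by
    push_cast
    exact Real.one_le_rpow (by linarith [(Nat.cast_nonneg k : (0 : ℝ) ≤ k)]) hγ)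

lemma rpow_le_two_mul_gammaSphere (hγ : 0 ≤ γ) (k : ℕ) :
    ((k : ℝ) + 1) ^ γ ≤ 2 * gammaSphere γ k := by
  have h1 := Nat.lt_floor_add_one (((k : ℝ) + 1) ^ γ)
  have h2 : (1 : ℝ) ≤ gammaSphere γ k := by exact_mod_cast one_le_gammaSphere hγ k
  change _ < (gammaSphere γ k : ℝ) + 1 at h1
  linarith

end GammaSphere

namespace OneDim

variable {s : ℕ → ℕ}

lemma m_nonneg (k : ℕ) : 0 ≤ m s k := Nat.cast_nonneg _

lemma wt_nonneg (k l : ℕ) : 0 ≤ wt s k l := by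
  unfold wt
  split_ifs <;> positivity

lemma wt_succ (k : ℕ) : wt s k (k + 1) = s k * s (k + 1) := if_pos (Or.inl rfl)

lemma Deg_eq (k : ℕ) : Deg s k = 1 / m s k * (wt s k (k - 1) + wt s k (k + 1)) := by
  have hne : k - 1 ≠ k + 1 := by omega
  rw [Deg, tsum_eq_sum (s := {k - 1, k + 1}), sum_pair hne]
  intro l hl
  simp only [mem_insert, mem_singleton, not_or] at hl
  exact if_neg (by omega)

lemma Deg_pos (hpos : ∀ k, 1 ≤ s k) (k : ℕ) : 0 < Deg s k := by
  have h (k : ℕ) : (0 : ℝ) < s k := by exact_mod_cast hpos k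
  rw [Deg_eq, wt_succ]
  have h1 : 0 < m s k := h k
  have := h k
  have := h (k + 1)
  have := wt_nonneg (s := s) k (k - 1)
  positivity

lemma Deg_le (hs : Monotone s) (hpos : ∀ k, 1 ≤ s k) (k : ℕ) : Deg s k ≤ 2 * s (k + 1) := by
  have h1 : (0 : ℝ) < s k := by exact_mod_cast hpos k
  have h2 : (s (k - 1) : ℝ) ≤ s (k + 1) := by exact_mod_cast hs (by omega)
  have h3 : wt s k (k - 1) ≤ s k * s (k + 1) := by
    unfold wt
    split_ifs
    · gcongr
    · positivity
  rw [Deg_eq, wt_succ, one_div, inv_mul_le_iff₀ (show 0 < m s k from h1), m]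
  linarith

lemma adj_of_wt_pos {k l : ℕ} (h : 0 < wt s k l) : k + 1 = l ∨ l + 1 = k := by
  by_contra hne
  simp [wt, hne] at h

lemma exists_path (hpos : ∀ k, 1 ≤ s k) (k l : ℕ) :
    ∃ (N : ℕ) (p : ℕ → ℕ), p 0 = k ∧ p N = l ∧ ∀ j < N, 0 < wt s (p j) (p (j + 1)) := by
  have h (i j : ℕ) : (0 : ℝ) < s i * s j := by
    have h1 : (0 : ℝ) < s i := by exact_mod_cast hpos i
    have h2 : (0 : ℝ) < s j := by exact_mod_cast hpos j
    positivity
  rcases le_total k l with hkl | hkl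
  · refine ⟨l - k, fun j => k + j, by simp, by simp; omega, fun j _ => ?_⟩
    rw [wt, if_pos (by grind)]
    exact h _ _
  · refine ⟨k - l, fun j => k - j, by simp, by simp; omega, fun j _ => ?_⟩
    rw [wt, if_pos (by grind)]
    exact h _ _

/-- A function whose increments are dominated by the edge lengths is dominated by the metric. -/
lemma sub_le_rho (hpos : ∀ k, 1 ≤ s k) {f : ℕ → ℝ} {C : ℝ} (hf : Monotone f) (hC : 0 < C)
    (hfC : ∀ k, f (k + 1) - f k ≤ C * √(min (1 / Deg s k) (1 / Deg s (k + 1)))) (k l : ℕ) :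
    f l - f k ≤ C * rho s k l := by
  rw [← div_le_iff₀' hC]
  refine le_csInf ?_ ?_
  · obtain ⟨N, p, h0, hN, hp⟩ := exists_path hpos k l
    exact ⟨_, N, p, h0, hN, hp, rfl⟩
  rintro L ⟨N, p, rfl, rfl, hp, rfl⟩
  rw [div_le_iff₀' hC, ← sum_range_sub (fun j => f (p j)), mul_sum]
  refine sum_le_sum fun j hj => ?_
  rcases adj_of_wt_pos (hp j (mem_range.1 hj)) with h | h
  · rw [← h]
    exact hfC _
  · have h1 : f (p (j + 1)) ≤ f (p j) := hf (by omega)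
    have h2 : 0 ≤ C * √(min (1 / Deg s (p j)) (1 / Deg s (p (j + 1)))) := by positivity
    linarith

/-- Finitely many edges carry the energy of a finitely supported function. -/
lemma summable_energy {φ : ℕ → ℝ} {M : ℕ} (hφ : ∀ l, M ≤ l → φ l = 0) :
    Summable fun p : ℕ × ℕ => wt s p.1 p.2 * (φ p.1 - φ p.2) ^ 2 := by
  refine summable_of_ne_finset_zero (s := range (M + 1) ×ˢ range (M + 1)) ?_
  rintro ⟨i, j⟩ hij
  simp only [mem_product, mem_range, not_and_or, not_lt] at hij
  by_cases h : i + 1 = j ∨ j + 1 = i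
  · simp [hφ i (by omega), hφ j (by omega)]
  · simp [wt, h]

lemma sum_Ico_le_energy {φ : ℕ → ℝ} {M : ℕ} (hφ : ∀ l, M ≤ l → φ l = 0) (a b : ℕ) :
    ∑ j ∈ Ico a b, (s j * s (j + 1) : ℝ) * (φ (j + 1) - φ j) ^ 2 ≤
      ∑' p : ℕ × ℕ, wt s p.1 p.2 * (φ p.1 - φ p.2) ^ 2 := by
  have hinj : Function.Injective fun j : ℕ => (j, j + 1) := fun i j h => (Prod.ext_iff.1 h).1
  have := (summable_energy (s := s) hφ).sum_le_tsum ((Ico a b).map ⟨_, hinj⟩)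
    fun p _ => mul_nonneg (wt_nonneg _ _) (sq_nonneg _)
  rw [sum_map] at this
  refine le_trans (le_of_eq (sum_congr rfl fun j _ => ?_)) this
  simp only [Function.Embedding.coeFn_mk, wt_succ]
  ring

lemma vol_le_sum_range {A : Set ℕ} {M : ℕ} (hA : ∀ l ∈ A, l < M) :
    vol s A ≤ ∑ l ∈ range M, m s l := by
  rw [vol, tsum_eq_sum (s := range M)]
  · exact sum_le_sum fun l _ => Set.indicator_le_self' (fun _ _ => m_nonneg _) _
  · intro l hl
    exact Set.indicator_of_notMem (fun h => hl (mem_range.2 (hA l h))) _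

lemma vol_nonneg (A : Set ℕ) : 0 ≤ vol s A :=
  tsum_nonneg fun _ => Set.indicator_nonneg (fun _ _ => m_nonneg _) _

variable {γ : ℝ}

lemma exists_rpow_sub_le_rho (hγ0 : 0 < γ) (hγ2 : γ < 2) :
    ∃ C : ℝ, 0 < C ∧ ∀ k l : ℕ, ((l : ℝ) + 1) ^ (1 - γ / 2) - ((k : ℝ) + 1) ^ (1 - γ / 2) ≤
      C * rho (gammaSphere γ) k l := by
  have hpos := one_le_gammaSphere hγ0.le
  have hmono := gammaSphere_mono hγ0.le
  refine ⟨√(2 * 3 ^ γ), by positivity, sub_le_rho (f := fun k => ((k : ℝ) + 1) ^ (1 - γ / 2))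
    hpos (fun k l h => Real.rpow_le_rpow (by positivity) (by gcongr) (by linarith))
    (by positivity) fun k => ?_⟩
  set x : ℝ := (k : ℝ) + 1 with hx
  have hx1 : 1 ≤ x := by linarith [(Nat.cast_nonneg k : (0 : ℝ) ≤ k)]
  have hx0 : 0 < x := by linarith
  have hincr : (x + 1) ^ (1 - γ / 2) - x ^ (1 - γ / 2) ≤ √(x ^ (-γ)) := by
    have h1 : (x + 1) ^ (1 - γ / 2) ≤ x ^ (1 - γ / 2) * (1 + (1 - γ / 2) * x⁻¹) := by
      rw [show x + 1 = x * (1 + x⁻¹) by field_simp, Real.mul_rpow hx0.le (by positivity)]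
      gcongr
      exact rpow_one_add_le_one_add_mul_self (by linarith [inv_pos.2 hx0]) (by linarith)
        (by linarith)
    have h2 : x ^ (1 - γ / 2) * x⁻¹ = √(x ^ (-γ)) := by
      rw [Real.sqrt_eq_rpow, ← Real.rpow_mul hx0.le, ← Real.rpow_neg_one x,
        ← Real.rpow_add hx0]
      congr 1
      ring
    have h3 : 0 ≤ √(x ^ (-γ)) := by positivity
    nlinarith
  have hdeg (i : ℕ) (hi : i ≤ k + 1) : x ^ (-γ) ≤ 2 * 3 ^ γ * (1 / Deg (gammaSphere γ) i) := by
    have hD := Deg_pos hpos i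
    have hle : Deg (gammaSphere γ) i ≤ 2 * 3 ^ γ * x ^ γ := by
      refine (Deg_le hmono hpos i).trans ?_
      rw [mul_assoc, ← Real.mul_rpow (by norm_num) hx0.le]
      refine mul_le_mul_of_nonneg_left ((gammaSphere_le _).trans ?_) (by norm_num)
      refine Real.rpow_le_rpow (by positivity) ?_ hγ0.le
      have : (i : ℝ) ≤ k + 1 := by exact_mod_cast hi
      push_cast
      linarith
    rw [mul_one_div, le_div_iff₀ hD, Real.rpow_neg hx0.le, inv_mul_le_iff₀ (by positivity)]
    linarith
  have hcast : ((k + 1 : ℕ) : ℝ) + 1 = x + 1 := by push_cast; rfl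
  simp only [hcast]
  refine hincr.trans ?_
  rw [← Real.sqrt_mul (by positivity)]
  refine Real.sqrt_le_sqrt ?_
  rw [mul_min_of_nonneg _ _ (by positivity)]
  exact le_min (hdeg k k.le_succ) (hdeg (k + 1) le_rfl)

/-- Balls of radius `r ≥ max 1 (ρ 0 k)` are contained in an initial segment of length
comparable to `r ^ (2 / (2 - γ))`. -/
lemma exists_ball_subset_Iio (hγ0 : 0 < γ) (hγ2 : γ < 2) :
    ∃ C : ℝ, 0 < C ∧ ∀ k : ℕ, ∀ r : ℝ, max 1 (rho (gammaSphere γ) 0 k) ≤ r →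
      ∃ M : ℕ, 1 ≤ M ∧ (M : ℝ) ^ (2 - γ) ≤ C * r ^ 2 ∧
        ∀ l ∈ ball (gammaSphere γ) k r, l < M := by
  obtain ⟨C, hC, hρ⟩ := exists_rpow_sub_le_rho hγ0 hγ2
  refine ⟨(1 + 2 * C) ^ 2, by positivity, fun k r hr => ?_⟩
  have hr1 : 1 ≤ r := (le_max_left _ _).trans hr
  have hrk : rho (gammaSphere γ) 0 k ≤ r := (le_max_right _ _).trans hr
  have hp : 0 < 1 - γ / 2 := by linarith
  have hX : 1 ≤ (1 + 2 * C) * r := by nlinarith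
  have hX0 : 0 ≤ (1 + 2 * C) * r := by linarith
  refine ⟨⌊((1 + 2 * C) * r) ^ (1 - γ / 2)⁻¹⌋₊, ?_, ?_, fun l hl => ?_⟩
  · refine Nat.le_floor ?_
    push_cast
    exact Real.one_le_rpow hX (by positivity)
  · have h1 := Nat.floor_le (Real.rpow_nonneg hX0 (1 - γ / 2)⁻¹)
    rw [← mul_pow, show 2 - γ = (1 - γ / 2) * (2 : ℕ) by push_cast; ring,
      Real.rpow_mul (by positivity), Real.rpow_natCast]
    refine pow_le_pow_left₀ (by positivity) ?_ 2
    exact (Real.le_rpow_inv_iff_of_pos (by positivity) hX0 hp).1 h1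
  · refine Nat.le_floor ?_
    rw [Nat.cast_succ, Real.le_rpow_inv_iff_of_pos (by positivity) hX0 hp]
    have h1 := hρ 0 k
    have h2 := hρ k l
    have h3 : C * rho (gammaSphere γ) 0 k ≤ C * r := by gcongr
    have h4 : C * rho (gammaSphere γ) k l ≤ C * r := by
      gcongr
      exact hl
    simp only [Nat.cast_zero, zero_add, Real.one_rpow] at h1
    linarith

/-- Weighted pointwise bound by the energy for functions vanishing beyond `M`. -/
lemma exists_sq_le_energy (hγ0 : 0 < γ) {δ : ℝ} (hδ : 0 < δ) (hδγ : 2 * γ ≤ δ + 1) :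
    ∃ K : ℝ, 0 < K ∧ ∀ (M : ℕ) (φ : ℕ → ℝ), (∀ l, M ≤ l → φ l = 0) → ∀ l < M,
      φ l ^ 2 ≤ K * (M : ℝ) ^ (δ + 1 - 2 * γ) *
        (∑' p : ℕ × ℕ, wt (gammaSphere γ) p.1 p.2 * (φ p.1 - φ p.2) ^ 2) *
          ((l : ℝ) + 1) ^ (-δ) := by
  obtain ⟨K, hK, hsum⟩ := exists_sum_Ico_rpow_le hδ
  refine ⟨4 * K, by positivity, fun M φ hφ l hl => ?_⟩
  have hs (j : ℕ) : (0 : ℝ) < gammaSphere γ j := by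
    exact_mod_cast one_le_gammaSphere hγ0.le j
  have htel : φ l ^ 2 = (∑ j ∈ Ico l M, (φ (j + 1) - φ j)) ^ 2 := by
    rw [sum_Ico_sub _ hl.le, hφ M le_rfl]
    ring
  have hcs := sum_sq_le_sum_mul_sum_of_sq_le_mul (Ico l M)
    (r := fun j => φ (j + 1) - φ j)
    (f := fun j => (gammaSphere γ j * gammaSphere γ (j + 1) : ℝ)⁻¹)
    (g := fun j => (gammaSphere γ j * gammaSphere γ (j + 1) : ℝ) * (φ (j + 1) - φ j) ^ 2)
    (fun j _ => by positivity) (fun j _ => by positivity) (fun j _ => by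
      have := (hs j).ne'
      have := (hs (j + 1)).ne'
      field_simp
      exact le_rfl)
  have hres : ∑ j ∈ Ico l M, (gammaSphere γ j * gammaSphere γ (j + 1) : ℝ)⁻¹ ≤
      4 * (M : ℝ) ^ (δ + 1 - 2 * γ) * (K * ((l : ℝ) + 1) ^ (-δ)) := by
    refine le_trans ?_ (mul_le_mul_of_nonneg_left (hsum l M hl.le) (by positivity))
    rw [mul_sum]
    refine sum_le_sum fun j hj => ?_
    have hjM : (j : ℝ) + 1 ≤ M := by exact_mod_cast (mem_Ico.1 hj).2
    have hj0 : (0 : ℝ) < (j : ℝ) + 1 := by positivity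
    have hmono : (gammaSphere γ j : ℝ) ≤ gammaSphere γ (j + 1) := by
      exact_mod_cast gammaSphere_mono hγ0.le j.le_succ
    have hlow := rpow_le_two_mul_gammaSphere hγ0.le j
    have hprod : ((j : ℝ) + 1) ^ (2 * γ) ≤
        4 * (gammaSphere γ j * gammaSphere γ (j + 1) : ℝ) := by
      rw [two_mul, Real.rpow_add hj0]
      have := hs j
      have h0 : 0 ≤ ((j : ℝ) + 1) ^ γ := by positivity
      nlinarith
    calc (gammaSphere γ j * gammaSphere γ (j + 1) : ℝ)⁻¹
        ≤ 4 * ((j : ℝ) + 1) ^ (-(2 * γ)) := by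
          have := hs j
          have := hs (j + 1)
          rw [Real.rpow_neg hj0.le, inv_le_iff_one_le_mul₀ (by positivity)]
          field_simp
          linarith
      _ = 4 * ((j : ℝ) + 1) ^ (δ + 1 - 2 * γ) * ((j : ℝ) + 1) ^ (-δ - 1) := by
          rw [mul_assoc, ← Real.rpow_add hj0]
          congr 2
          ring
      _ ≤ _ := by gcongr
  rw [htel]
  refine hcs.trans ((mul_le_mul hres (sum_Ico_le_energy hφ l M)
    (sum_nonneg fun j _ => by positivity) (by positivity)).trans (le_of_eq ?_))
  ring

/-- Sobolev inequality for functions supported in `{0, …, M - 1}`, with explicit dependence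
on `M`. -/
lemma exists_sobolev_of_vanishing (hγ0 : 0 < γ) {n δ : ℝ} (hn : 2 < n) (hδ : 0 < δ)
    (hδγ : 2 * γ ≤ δ + 1) (hδn : δ < (γ + 1) * (1 - 2 / n)) :
    ∃ K : ℝ, 0 < K ∧ ∀ (M : ℕ) (φ : ℕ → ℝ), 1 ≤ M → (∀ l, M ≤ l → φ l = 0) →
      (∑' l : ℕ, m (gammaSphere γ) l * |φ l| ^ (2 * n / (n - 2))) ^ ((n - 2) / n) ≤
        K * (M : ℝ) ^ (2 - γ - (γ + 1) * (2 / n)) *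
          ∑' p : ℕ × ℕ, wt (gammaSphere γ) p.1 p.2 * (φ p.1 - φ p.2) ^ 2 := by
  have hn0 : 0 < n := by linarith
  have hn2 : 0 < n - 2 := by linarith
  set h : ℝ := n / (n - 2) with hh
  have hh0 : 0 < h := by positivity
  have hinv : (n - 2) / n = h⁻¹ := by rw [hh, inv_div]
  have hinv' : h⁻¹ = 1 - 2 / n := by rw [← hinv]; field_simp
  have hp : 0 < γ + 1 - δ * h := by
    rw [← hinv', ← div_eq_mul_inv, lt_div_iff₀ hh0] at hδn
    linarith
  obtain ⟨K₁, hK₁, hsq⟩ := exists_sq_le_energy hγ0 hδ hδγ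
  obtain ⟨K₂, hK₂, hsum⟩ := exists_sum_range_rpow_le hp
  refine ⟨K₁ * K₂ ^ h⁻¹, by positivity, fun M φ hM hφ => ?_⟩
  have hM0 : (0 : ℝ) < M := by exact_mod_cast hM
  set E := ∑' p : ℕ × ℕ, wt (gammaSphere γ) p.1 p.2 * (φ p.1 - φ p.2) ^ 2
  have hE : 0 ≤ E := tsum_nonneg fun p => mul_nonneg (wt_nonneg _ _) (sq_nonneg _)
  set A := K₁ * (M : ℝ) ^ (δ + 1 - 2 * γ) * E
  have hA : 0 ≤ A := by positivity
  have hq : 2 * n / (n - 2) = (2 : ℕ) * h := by rw [hh]; push_cast; ring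
  have hq0 : 2 * n / (n - 2) ≠ 0 := by positivity
  have hbound : ∑' l : ℕ, m (gammaSphere γ) l * |φ l| ^ (2 * n / (n - 2)) ≤
      A ^ h * (K₂ * (M : ℝ) ^ (γ + 1 - δ * h)) := by
    rw [tsum_eq_sum (s := range M) fun l hl => by
      rw [hφ l (by simpa using hl), abs_zero, Real.zero_rpow hq0, mul_zero]]
    refine le_trans ?_ (mul_le_mul_of_nonneg_left (hsum M hM) (by positivity))
    rw [mul_sum]
    refine sum_le_sum fun l hl => ?_
    have hl0 : (0 : ℝ) < (l : ℝ) + 1 := by positivity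
    have h1 : |φ l| ^ (2 * n / (n - 2)) ≤ A ^ h * ((l : ℝ) + 1) ^ (-δ * h) := by
      rw [hq, Real.rpow_mul (abs_nonneg _), Real.rpow_natCast, sq_abs,
        Real.rpow_mul hl0.le, ← Real.mul_rpow hA (by positivity)]
      exact Real.rpow_le_rpow (sq_nonneg _) (hsq M φ hφ l (mem_range.1 hl)) hh0.le
    calc m (gammaSphere γ) l * |φ l| ^ (2 * n / (n - 2))
        ≤ ((l : ℝ) + 1) ^ γ * (A ^ h * ((l : ℝ) + 1) ^ (-δ * h)) :=
          mul_le_mul (gammaSphere_le l) h1 (by positivity) (by positivity)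
      _ = A ^ h * (((l : ℝ) + 1) ^ γ * ((l : ℝ) + 1) ^ (-δ * h)) := by ring
      _ = _ := by
          rw [← Real.rpow_add hl0]
          congr 2
          ring
  rw [hinv]
  refine (Real.rpow_le_rpow (tsum_nonneg fun l => mul_nonneg (m_nonneg _) (by positivity))
    hbound (by positivity)).trans (le_of_eq ?_)
  rw [Real.mul_rpow (by positivity) (by positivity), Real.rpow_rpow_inv hA hh0.ne',
    Real.mul_rpow hK₂.le (by positivity), ← Real.rpow_mul hM0.le]
  have hexp : (M : ℝ) ^ (2 - γ - (γ + 1) * (2 / n)) =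
      (M : ℝ) ^ (δ + 1 - 2 * γ) * (M : ℝ) ^ ((γ + 1 - δ * h) * h⁻¹) := by
    rw [← Real.rpow_add hM0, sub_mul, mul_assoc δ, mul_inv_cancel₀ hh0.ne', hinv']
    congr 1
    ring
  rw [hexp]
  ring

lemma vol_le_rpow (hγ0 : 0 < γ) {A : Set ℕ} {M : ℕ} (hA : ∀ l ∈ A, l < M) (hM : 1 ≤ M) :
    vol (gammaSphere γ) A ≤ (M : ℝ) ^ (γ + 1) := by
  have hM0 : (0 : ℝ) < M := by exact_mod_cast hM
  refine (vol_le_sum_range hA).trans ?_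
  have : ∀ l ∈ range M, m (gammaSphere γ) l ≤ (M : ℝ) ^ γ := fun l hl =>
    (gammaSphere_le l).trans (Real.rpow_le_rpow (by positivity)
      (by exact_mod_cast mem_range.1 hl) hγ0.le)
  refine (sum_le_card_nsmul _ _ _ this).trans (le_of_eq ?_)
  rw [card_range, nsmul_eq_mul, Real.rpow_add hM0, Real.rpow_one, mul_comm]

end OneDim

end Helpers

/-- **Sobolev inequality for anti-trees.**
For `γ ∈ (0,2)`, `d := 2(γ+1)/(2-γ)` and a real `n ≥ 2d` (note `2d > 2`), consider the
one-dimensional graph `b̃` over `(ℕ₀, m̃)` associated with the `γ`-anti-tree, with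
intrinsic degree path metric `ρ̃` and closed balls `B̃_k(r)`.  There is `C_S > 0` such
that for every `k ∈ ℕ₀`, every `r ≥ max(1, ρ̃(0,k))` and every finitely supported
`φ : ℕ₀ → ℝ` with support contained in `B̃_k(r)`:
`(m̃(B̃_k(r))^{2/n}/(C_S r²)) (∑_l m̃(l)|φ(l)|^{2n/(n-2)})^{(n-2)/n}
  ≤ ∑_{k',l} b̃(k',l)(φ(k')-φ(l))² + (1/r²) ∑_l m̃(l) φ(l)²`. -/
theorem gammaAntiTree_sobolev (γ : ℝ) (hγ0 : 0 < γ) (hγ2 : γ < 2)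
    (n : ℝ) (hnd : 2 * (2 * (γ + 1) / (2 - γ)) ≤ n) :
    ∃ C_S : ℝ, 0 < C_S ∧ ∀ k : ℕ, ∀ r : ℝ, max 1 (OneDim.rho (gammaSphere γ) 0 k) ≤ r →
      ∀ φ : ℕ → ℝ, (Function.support φ).Finite →
        Function.support φ ⊆ OneDim.ball (gammaSphere γ) k r →
        OneDim.vol (gammaSphere γ) (OneDim.ball (gammaSphere γ) k r) ^ (2 / n) /
              (C_S * r ^ 2) *
            (∑' l : ℕ, OneDim.m (gammaSphere γ) l * |φ l| ^ (2 * n / (n - 2))) ^ ((n - 2) / n) ≤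
          (∑' p : ℕ × ℕ, OneDim.wt (gammaSphere γ) p.1 p.2 * (φ p.1 - φ p.2) ^ 2) +
            (1 / r ^ 2) * ∑' l : ℕ, OneDim.m (gammaSphere γ) l * φ l ^ 2 := by
  have hγ : 0 < 2 - γ := by linarith
  have hd : 4 * (γ + 1) ≤ n * (2 - γ) := by
    have h := mul_le_mul_of_nonneg_right hnd hγ.le
    have h' : 2 * (2 * (γ + 1) / (2 - γ)) * (2 - γ) = 4 * (γ + 1) := by
      field_simp
      ring
    linarith
  have hn : 2 < n := by nlinarith
  have hn0 : 0 < n := by linarith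
  have hgap : 3 * γ / 2 ≤ (γ + 1) * (1 - 2 / n) := by
    have : (γ + 1) * (2 / n) ≤ (2 - γ) / 2 := by
      rw [← mul_div_assoc, div_le_iff₀ hn0]
      linarith
    linarith
  obtain ⟨K, hK, hsob⟩ := OneDim.exists_sobolev_of_vanishing (δ := max γ (2 * γ - 1)) hγ0 hn
    (lt_max_of_lt_left hγ0) (by linarith [le_max_right γ (2 * γ - 1)])
    (max_lt (by linarith) (by linarith))
  obtain ⟨C, hC, hball⟩ := OneDim.exists_ball_subset_Iio hγ0 hγ2
  refine ⟨C * K, by positivity, fun k r hr φ _ hφ => ?_⟩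
  obtain ⟨M, hM, hMr, hBM⟩ := hball k r hr
  have hr0 : 0 < r := by linarith [(le_max_left _ _).trans hr]
  have hM0 : (0 : ℝ) < M := by exact_mod_cast hM
  have hE : 0 ≤ ∑' p : ℕ × ℕ, OneDim.wt (gammaSphere γ) p.1 p.2 * (φ p.1 - φ p.2) ^ 2 :=
    tsum_nonneg fun p => mul_nonneg (OneDim.wt_nonneg _ _) (sq_nonneg _)
  have hL : 0 ≤ 1 / r ^ 2 * ∑' l : ℕ, OneDim.m (gammaSphere γ) l * φ l ^ 2 :=
    mul_nonneg (by positivity)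
      (tsum_nonneg fun l => mul_nonneg (OneDim.m_nonneg _) (sq_nonneg _))
  have hvol : OneDim.vol (gammaSphere γ) (OneDim.ball (gammaSphere γ) k r) ^ (2 / n) ≤
      (M : ℝ) ^ ((γ + 1) * (2 / n)) := by
    rw [Real.rpow_mul hM0.le]
    exact Real.rpow_le_rpow (OneDim.vol_nonneg _) (OneDim.vol_le_rpow hγ0 hBM hM)
      (by positivity)
  have hφM : ∀ l, M ≤ l → φ l = 0 := fun l hl => by
    by_contra hne
    exact absurd (hBM l (hφ hne)) (not_lt.2 hl)
  refine le_trans ?_ (le_add_of_nonneg_right hL)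
  rw [div_mul_eq_mul_div, div_le_iff₀ (by positivity)]
  refine (mul_le_mul hvol (hsob M φ hM hφM) (Real.rpow_nonneg (tsum_nonneg fun l =>
    mul_nonneg (OneDim.m_nonneg _) (by positivity)) _) (by positivity)).trans ?_
  have hexp : (M : ℝ) ^ (2 - γ) =
      (M : ℝ) ^ ((γ + 1) * (2 / n)) * (M : ℝ) ^ (2 - γ - (γ + 1) * (2 / n)) := by
    rw [← Real.rpow_add hM0]
    congr 1
    ring
  rw [hexp] at hMr
  have := mul_le_mul_of_nonneg_right hMr (mul_nonneg hK.le hE)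
  linarith
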